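/- arXiv:1208.2136 — 7 statements merged into one kernel-verified Lean document; each statement's English description precedes it below -/
import Mathlib

section
/- For every real number k > 1 there exists a function g : ℝ → ℝ such that g(0) = 0 and for every s ∈ ℝ, g has derivative (1 + |g(s)|^k)^(-1/2) at s; moreover g is odd, strictly monotone increasing, and surjective onto ℝ; and g is unique: any two functions g₁, g₂ : ℝ → ℝ satisfying g(0) = 0 and this derivative condition at every point are equal. -/
/-!
The equation is autonomous and scalar, so it is solved by separation of variables. The travel time
`F x = ∫₀ˣ √(1 + |t|^k) dt` is odd, has derivative at least `1`, and is therefore an increasing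
bijection of `ℝ`; its inverse is the solution. Conversely, along any solution `g` the function
`F ∘ g` has derivative `1` and vanishes at `0`, so `F (g s) = s`, and uniqueness follows from
injectivity of `F`.
-/

/-- The time a solution of the Cauchy problem takes to travel from `0` to `x`. -/
noncomputable def travelTime (k x : ℝ) : ℝ := ∫ t in (0 : ℝ)..x, (1 + |t| ^ k) ^ ((1 : ℝ) / 2)

lemma one_add_abs_rpow_pos (k t : ℝ) : 0 < 1 + |t| ^ k := by positivity

lemma travelTime_zero (k : ℝ) : travelTime k 0 = 0 := by simp [travelTime]

lemma travelTime_neg (k x : ℝ) : travelTime k (-x) = -travelTime k x := by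
  have h := intervalIntegral.integral_comp_neg (a := 0) (b := x)
    (fun t : ℝ => (1 + |t| ^ k) ^ ((1 : ℝ) / 2))
  simp only [abs_neg, neg_zero] at h
  rw [travelTime, travelTime, h, intervalIntegral.integral_symm]

lemma hasDerivAt_travelTime {k : ℝ} (hk : 1 < k) (x : ℝ) :
    HasDerivAt (travelTime k) ((1 + |x| ^ k) ^ ((1 : ℝ) / 2)) x := by
  have hc : Continuous fun t : ℝ => (1 + |t| ^ k) ^ ((1 : ℝ) / 2) :=
    (continuous_const.add (continuous_abs.rpow_const fun _ => Or.inr (by linarith))).rpow_const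
      fun t => Or.inl (one_add_abs_rpow_pos k t).ne'
  exact intervalIntegral.integral_hasDerivAt_right (hc.intervalIntegrable _ _)
    (hc.stronglyMeasurableAtFilter _ _) hc.continuousAt

lemma continuous_travelTime {k : ℝ} (hk : 1 < k) : Continuous (travelTime k) :=
  continuous_iff_continuousAt.2 fun x => (hasDerivAt_travelTime hk x).continuousAt

lemma strictMono_travelTime {k : ℝ} (hk : 1 < k) : StrictMono (travelTime k) :=
  strictMono_of_deriv_pos fun x => by
    rw [(hasDerivAt_travelTime hk x).deriv]
    exact Real.rpow_pos_of_pos (one_add_abs_rpow_pos k x) _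

/-- Speeds never exceed `1`, so the travel time grows at least linearly. -/
lemma monotone_travelTime_sub_id {k : ℝ} (hk : 1 < k) :
    Monotone fun x => travelTime k x - x := by
  have hd (x : ℝ) := (hasDerivAt_travelTime hk x).sub (hasDerivAt_id' x)
  refine monotone_of_deriv_nonneg (fun x => (hd x).differentiableAt) fun x => ?_
  have h1 : (1 : ℝ) ≤ (1 + |x| ^ k) ^ ((1 : ℝ) / 2) :=
    Real.one_le_rpow (by linarith [Real.rpow_nonneg (abs_nonneg x) k]) (by norm_num)
  have h2 := (hd x).deriv
  change 0 ≤ deriv (travelTime k - fun x => x) x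
  rw [h2]
  linarith

lemma surjective_travelTime {k : ℝ} (hk : 1 < k) : Function.Surjective (travelTime k) := by
  have hm := monotone_travelTime_sub_id hk
  have h0 := travelTime_zero k
  refine (continuous_travelTime hk).surjective ?_ ?_
  · refine Filter.tendsto_atTop_mono' _ ?_ Filter.tendsto_id
    filter_upwards [Filter.eventually_ge_atTop 0] with x hx
    have := hm hx
    simp only [h0, id] at *
    linarith
  · refine Filter.tendsto_atBot_mono' _ ?_ Filter.tendsto_id
    filter_upwards [Filter.eventually_le_atBot 0] with x hx
    have := hm hx
    simp only [h0, id] at *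
    linarith

lemma travelTime_solution {k : ℝ} (hk : 1 < k) {g : ℝ → ℝ} (h0 : g 0 = 0)
    (hg : ∀ s : ℝ, HasDerivAt g ((1 + |g s| ^ k) ^ (-(1:ℝ)/2)) s) (s : ℝ) :
    travelTime k (g s) = s := by
  have hd (s : ℝ) : HasDerivAt (fun s => travelTime k (g s) - s) 0 s := by
    have h := ((hasDerivAt_travelTime hk (g s)).comp s (hg s)).sub (hasDerivAt_id' s)
    rw [← Real.rpow_add (one_add_abs_rpow_pos k (g s))] at h
    norm_num at h
    exact h
  have h := is_const_of_deriv_eq_zero (fun s => (hd s).differentiableAt)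
    (fun s => (hd s).deriv) s 0
  simp only [h0, travelTime_zero] at h
  linarith

/-- For every real `k > 1` the Cauchy problem `g' = (1 + |g|^k)^(-1/2)`, `g 0 = 0`
has a unique global solution, which is odd, strictly increasing and surjective. -/
theorem cauchy_problem_global_solution (k : ℝ) (hk : 1 < k) :
    (∃ g : ℝ → ℝ,
      g 0 = 0 ∧
      (∀ s : ℝ, HasDerivAt g ((1 + |g s| ^ k) ^ (-(1:ℝ)/2)) s) ∧
      (∀ s : ℝ, g (-s) = - g s) ∧
      StrictMono g ∧
      Function.Surjective g) ∧
    (∀ g₁ g₂ : ℝ → ℝ,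
      (g₁ 0 = 0 ∧ ∀ s : ℝ, HasDerivAt g₁ ((1 + |g₁ s| ^ k) ^ (-(1:ℝ)/2)) s) →
      (g₂ 0 = 0 ∧ ∀ s : ℝ, HasDerivAt g₂ ((1 + |g₂ s| ^ k) ^ (-(1:ℝ)/2)) s) →
      g₁ = g₂) := by
  have hmono := strictMono_travelTime hk
  refine ⟨?_, fun g₁ g₂ h₁ h₂ => funext fun s => hmono.injective ?_⟩
  · let e : ℝ ≃o ℝ := hmono.orderIsoOfSurjective _ (surjective_travelTime hk)
    have he (s : ℝ) : travelTime k (e.symm s) = s := e.apply_symm_apply s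
    refine ⟨e.symm, ?_, fun s => ?_, fun s => ?_, e.symm.strictMono, e.symm.surjective⟩
    · apply hmono.injective
      rw [he, travelTime_zero]
    · have h := HasDerivAt.of_local_left_inverse e.symm.continuous.continuousAt
        (hasDerivAt_travelTime hk (e.symm s))
        (Real.rpow_pos_of_pos (one_add_abs_rpow_pos k _) _).ne' (Filter.Eventually.of_forall he)
      rw [neg_div, Real.rpow_neg (one_add_abs_rpow_pos k _).le]
      exact h
    · apply hmono.injective
      rw [he, travelTime_neg, he]
  · rw [travelTime_solution hk h₁.1 h₁.2, travelTime_solution hk h₂.1 h₂.2]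
end

section
/- Let a, f : ℝ → ℝ be three times continuously differentiable with a(t) > 0 for all t, and let g : ℝ → ℝ satisfy: for every s ∈ ℝ, g has derivative (a(g(s)))^(-1/2) at s. Define h(s) = f(g(s)) · (a(g(s)))^(-1/2) and Θ(t) = 2·f''(t)·a(t)² − 3·f'(t)·a'(t)·a(t) − f(t)·a''(t)·a(t) + 2·f(t)·(a'(t))². Then h is three times differentiable and for every s ∈ ℝ, the third derivative of h at s equals (1/4)·(a(g(s)))^(-5)·(2·Θ'(g(s))·a(g(s)) − 7·a'(g(s))·Θ(g(s))), where Θ' is the derivative of Θ. -/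
/-!
Since `g' = (a ∘ g)^(-1/2)`, differentiating a product `(F ∘ g) * (a ∘ g)^p` gives a function of
the same shape, with `F` replaced by `F' a + p a' F` and `p` by `p - 3/2`
(`hasDerivAt_comp_mul_rpow`). Starting from `F = f`, `p = -1/2`, the three derivatives are

* `h' = (f' a - f a' / 2) a^(-2)`,
* `h'' = (Θ / 2) a^(-7/2)`,
* `h''' = (Θ' a / 2 - 7 a' Θ / 4) a^(-5)`,

with the right-hand sides evaluated at `g s`. The second line is where `Θ` comes from.
-/

/-- The differentiation rule along `g`, where `g' = (a ∘ g)^(-1/2)`: the pair `(F, p)`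
representing `(F ∘ g) * (a ∘ g)^p` is sent to `(F' a + p a' F, p - 3/2)`. The exponent `q` is a
separate variable so that the rule can be applied with numerals. -/
lemma hasDerivAt_comp_mul_rpow {a g F : ℝ → ℝ} {a' F' s : ℝ} (p q : ℝ) (hq : q = p - 3 / 2)
    (hapos : 0 < a (g s)) (ha : HasDerivAt a a' (g s)) (hF : HasDerivAt F F' (g s))
    (hg : HasDerivAt g ((a (g s)) ^ (-(1:ℝ)/2)) s) :
    HasDerivAt (fun s => F (g s) * (a (g s)) ^ p)
      ((F' * a (g s) + p * a' * F (g s)) * (a (g s)) ^ q) s := by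
  have h1 := (hF.comp s hg).mul ((ha.comp s hg).rpow_const (p := p) (Or.inl hapos.ne'))
  refine h1.congr_deriv ?_
  have e1 : (a (g s)) ^ (-(1:ℝ)/2) * (a (g s)) ^ p = a (g s) * (a (g s)) ^ q := by
    rw [← Real.rpow_add hapos, mul_comm (a (g s)), ← Real.rpow_add_one hapos.ne', hq]
    ring_nf
  have e2 : (a (g s)) ^ (-(1:ℝ)/2) * (a (g s)) ^ (p - 1) = (a (g s)) ^ q := by
    rw [← Real.rpow_add hapos, hq]
    ring_nf
  simp only [Function.comp_apply]
  linear_combination F' * e1 + F (g s) * a' * p * e2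

/-- Third-derivative formula for the transformed nonlinearity
`h(s) = f(g(s)) · a(g(s))^(-1/2)` where `g' = (a ∘ g)^(-1/2)`:
`h'''(s) = (1/4) a(g(s))^(-5) [2 Θ'(g(s)) a(g(s)) - 7 a'(g(s)) Θ(g(s))]`. -/
theorem third_deriv_transformed_nonlinearity
    (a f g : ℝ → ℝ)
    (ha : ContDiff ℝ 3 a) (hf : ContDiff ℝ 3 f)
    (hapos : ∀ t : ℝ, 0 < a t)
    (hg : ∀ s : ℝ, HasDerivAt g ((a (g s)) ^ (-(1:ℝ)/2)) s)
    (h : ℝ → ℝ) (hh : h = fun s => f (g s) * (a (g s)) ^ (-(1:ℝ)/2))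
    (Θ : ℝ → ℝ)
    (hΘ : Θ = fun t => 2 * deriv (deriv f) t * (a t) ^ 2
      - 3 * deriv f t * deriv a t * a t
      - f t * deriv (deriv a) t * a t
      + 2 * f t * (deriv a t) ^ 2) :
    Differentiable ℝ h ∧
    Differentiable ℝ (deriv h) ∧
    Differentiable ℝ (deriv (deriv h)) ∧
    ∀ s : ℝ,
      deriv (deriv (deriv h)) s =
        (1/4) * (a (g s)) ^ (-(5:ℝ)) *
          (2 * deriv Θ (g s) * a (g s) - 7 * deriv a (g s) * Θ (g s)) := by
  have da : ∀ t, HasDerivAt a (deriv a t) t := fun t =>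
    (ha.differentiable (by norm_num) t).hasDerivAt
  have df : ∀ t, HasDerivAt f (deriv f t) t := fun t =>
    (hf.differentiable (by norm_num) t).hasDerivAt
  have ha1 : ContDiff ℝ 2 (deriv a) := ContDiff.deriv' (by exact_mod_cast ha)
  have hf1 : ContDiff ℝ 2 (deriv f) := ContDiff.deriv' (by exact_mod_cast hf)
  have ha2 : ContDiff ℝ 1 (deriv (deriv a)) := ContDiff.deriv' (by exact_mod_cast ha1)
  have hf2 : ContDiff ℝ 1 (deriv (deriv f)) := ContDiff.deriv' (by exact_mod_cast hf1)
  have da1 : ∀ t, HasDerivAt (deriv a) (deriv (deriv a) t) t := fun t =>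
    (ha1.differentiable (by norm_num) t).hasDerivAt
  have df1 : ∀ t, HasDerivAt (deriv f) (deriv (deriv f) t) t := fun t =>
    (hf1.differentiable (by norm_num) t).hasDerivAt
  have dΘ : ∀ t, HasDerivAt Θ (deriv Θ t) t := by
    have a0 := ha.differentiable (by norm_num)
    have f0 := hf.differentiable (by norm_num)
    have a1 := ha1.differentiable (by norm_num)
    have f1 := hf1.differentiable (by norm_num)
    have a2 := ha2.differentiable (by norm_num)
    have f2 := hf2.differentiable (by norm_num)
    have : Differentiable ℝ Θ := by
      rw [hΘ]
      fun_prop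
    exact fun t => (this t).hasDerivAt
  have h1 : ∀ s, HasDerivAt h
      ((deriv f (g s) * a (g s) - 1 / 2 * (deriv a (g s) * f (g s))) * (a (g s)) ^ (-(2:ℝ))) s := by
    intro s
    rw [hh]
    refine (hasDerivAt_comp_mul_rpow (-(1:ℝ)/2) (-(2:ℝ)) (by norm_num) (hapos _) (da _) (df _)
      (hg s)).congr_deriv ?_
    ring
  have h2 : ∀ s, HasDerivAt (deriv h) (Θ (g s) * (a (g s)) ^ (-(7:ℝ)/2) / 2) s := by
    intro s
    rw [show deriv h = _ from funext fun s => (h1 s).deriv]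
    have dF := ((df1 (g s)).mul (da (g s))).sub (((da1 (g s)).mul (df (g s))).const_mul (1 / 2))
    refine (hasDerivAt_comp_mul_rpow (-(2:ℝ)) (-(7:ℝ)/2) (by norm_num) (hapos _) (da _) dF
      (hg s)).congr_deriv ?_
    simp only [hΘ, Pi.mul_apply, Pi.sub_apply]
    ring
  have h3 : ∀ s, HasDerivAt (deriv (deriv h))
      ((1/4) * (a (g s)) ^ (-(5:ℝ)) *
          (2 * deriv Θ (g s) * a (g s) - 7 * deriv a (g s) * Θ (g s))) s := by
    intro s
    rw [show deriv (deriv h) = _ from funext fun s => (h2 s).deriv]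
    refine ((hasDerivAt_comp_mul_rpow (-(7:ℝ)/2) (-(5:ℝ)) (by norm_num) (hapos _) (da _) (dΘ _)
      (hg s)).div_const 2).congr_deriv ?_
    ring
  exact ⟨fun s => (h1 s).differentiableAt, fun s => (h2 s).differentiableAt,
    fun s => (h3 s).differentiableAt, fun s => (h3 s).deriv⟩
end

section
/- Let k, p be real numbers with k ≥ 2 and p > k + 1. Then for every real t > 0: 2·p·(p−1)·t^(p−2)·(1+t^k)² − 3·p·k·t^(p+k−2)·(1+t^k) − k·(k−1)·t^(p+k−2)·(1+t^k) + 2·k²·t^(p+2k−2) > 0. -/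
/-!
Dividing by `t^(p-2)` and writing `s = t^k`, the expression becomes a quadratic polynomial in `s`
with constant coefficient `2p(p-1)`, linear coefficient `4p(p-1) - 3pk - k(k-1)` and leading
coefficient `(2p-k)(p-k-1)`. All three are positive when `k ≥ 2` and `p > k + 1`, so the quadratic
is positive for `s > 0`.
-/

/-- Positivity of `2f''a² - 3f'a'a - fa''a + 2f(a')²` for `f(t) = t^p`, `a(t) = 1 + t^k`
on `(0, ∞)`, when `k ≥ 2` and `p > k + 1`. -/
theorem theta_positive_powers (k p : ℝ) (hk : 2 ≤ k) (hp : k + 1 < p) :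
    ∀ t : ℝ, 0 < t →
      0 < 2 * p * (p - 1) * t ^ (p - 2) * (1 + t ^ k) ^ 2
          - 3 * p * k * t ^ (p + k - 2) * (1 + t ^ k)
          - k * (k - 1) * t ^ (p + k - 2) * (1 + t ^ k)
          + 2 * k ^ 2 * t ^ (p + 2 * k - 2) := by
  intro t ht
  have e1 : t ^ (p + k - 2) = t ^ (p - 2) * t ^ k := by
    rw [← Real.rpow_add ht]; ring_nf
  have e2 : t ^ (p + 2 * k - 2) = t ^ (p - 2) * (t ^ k * t ^ k) := by
    rw [← Real.rpow_add ht, ← Real.rpow_add ht]; ring_nf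
  have hr : 0 < t ^ (p - 2) := Real.rpow_pos_of_pos ht _
  have hs : 0 < t ^ k := Real.rpow_pos_of_pos ht _
  rw [e1, e2]
  generalize t ^ (p - 2) = r at *
  generalize t ^ k = s at *
  have c0 : 0 < 2 * p * (p - 1) := by
    have : 0 < p - 1 := by linarith
    have : 0 < p := by linarith
    positivity
  -- Since `p - 1 > k`, the linear coefficient exceeds `4pk - 3pk - k(k-1) = k(p - k + 1) > 0`.
  have c1 : 0 < 4 * p * (p - 1) - 3 * p * k - k * (k - 1) := by
    have h1 : 0 < p * (p - 1 - k) := mul_pos (by linarith) (by linarith)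
    have h2 : 0 < k * (p - k + 1) := mul_pos (by linarith) (by linarith)
    linarith
  have c2 : 0 < (2 * p - k) * (p - k - 1) := mul_pos (by linarith) (by linarith)
  -- With `r = t^(p-2)` and `s = t^k`, the expression is `r` times a quadratic in `s` whose
  -- coefficients are all positive.
  have key : 0 < r * (2 * p * (p - 1) + (4 * p * (p - 1) - 3 * p * k - k * (k - 1)) * s
      + (2 * p - k) * (p - k - 1) * s ^ 2) :=
    mul_pos hr (add_pos (add_pos c0 (mul_pos c1 hs)) (mul_pos c2 (pow_pos hs 2)))
  linarith
end

section
/- Let k, p be real numbers with k ≥ 2 and p > k + 1, let ψ be a real number, and let g : ℝ → ℝ satisfy g(0) = 0 and, for every s ∈ ℝ, g has derivative (1 + |g(s)|^k)^(-1/2) at s. Define h : ℝ → ℝ by h(s) = ψ · (max (g(s)) 0)^p · (1 + |g(s)|^k)^(-1/2). If ψ ≥ 0, then h is convex on ℝ; if ψ > 0, then h is strictly convex on the open interval (0, +∞). -/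
/-!
Write `t = g s` and `u = t ^ k`. Since `g' = (1 + |g| ^ k) ^ (-1/2)`, wherever `t ≥ 0` the function
`h / ψ = t ^ p * (1 + t ^ k) ^ (-1/2)` has derivative in `s`

`p t^(p-1) / (1 + u) - (k/2) t^(p+k-1) / (1 + u)^2
  = t^(p-1-k) * (u * (p + (p - k/2) * u) / (1 + u)^2)`,

an explicit function of `t` alone, called `slopeFn k p t` below. Its first factor increases
in `t` because `p > k + 1`. The second has `u`-derivative `(p + (p - k) u) / (1 + u)^3 > 0`, so it
increases too. Hence `slopeFn` is strictly increasing on `[0, ∞)`. For `t ≤ 0` both `h` and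
its derivative vanish, so `h' = ψ * slopeFn k p (max (g s) 0)` on all of `ℝ`. As `g` is strictly
increasing, `h'` is monotone on `ℝ` and strictly monotone on `(0, ∞)`; no second derivative of `h`
is needed.
-/

/-- The derivative `h' / ψ` of the transformed nonlinearity, as a function of `t = g s ≥ 0`. -/
noncomputable def slopeFn (k p t : ℝ) : ℝ :=
  t ^ (p - 1 - k) * (t ^ k * (p + (p - k / 2) * t ^ k) / (1 + t ^ k) ^ 2)

/-- The rational factor of `slopeFn`, in the variable `u = t ^ k`, is strictly increasing. -/
lemma rational_factor_lt {k p u v : ℝ} (hk : 2 ≤ k) (hp : k + 1 < p) (hu : 0 ≤ u) (huv : u < v) :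
    u * (p + (p - k / 2) * u) / (1 + u) ^ 2 < v * (p + (p - k / 2) * v) / (1 + v) ^ 2 := by
  have hv : 0 < v := hu.trans_lt huv
  rw [div_lt_div_iff₀ (by positivity) (by positivity), ← sub_pos]
  have key : v * (p + (p - k / 2) * v) * (1 + u) ^ 2 - u * (p + (p - k / 2) * u) * (1 + v) ^ 2
      = (v - u) * (p + (p - k / 2) * (u + v) + (p - k) * (u * v)) := by ring
  have h1 : 0 < v - u := by linarith
  have h2 : 0 < p := by linarith
  have h3 : 0 < p - k / 2 := by linarith
  have h4 : 0 < p - k := by linarith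
  rw [key]
  positivity

lemma slopeFn_strictMonoOn {k p : ℝ} (hk : 2 ≤ k) (hp : k + 1 < p) :
    StrictMonoOn (slopeFn k p) (Set.Ici 0) := by
  intro x hx y _ hxy
  have hx : 0 ≤ x := hx
  have hy : 0 < y := hx.trans_lt hxy
  have hxk : 0 ≤ x ^ k := Real.rpow_nonneg hx k
  have hpow : x ^ (p - 1 - k) < y ^ (p - 1 - k) := Real.rpow_lt_rpow hx hxy (by linarith)
  have hrat := rational_factor_lt hk hp hxk (Real.rpow_lt_rpow hx hxy (by linarith : 0 < k))
  have hq : 0 ≤ p - k / 2 := by linarith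
  have hp0 : 0 ≤ p := by linarith
  exact mul_lt_mul'' hpow hrat (Real.rpow_nonneg hx _) (by positivity)

/-- For exponents above `1`, the truncated power is differentiable even at the corner `0`. -/
lemma hasDerivAt_max_rpow {r : ℝ} (hr : 1 < r) (x : ℝ) :
    HasDerivAt (fun y : ℝ => (max y 0) ^ r) (r * (max x 0) ^ (r - 1)) x := by
  rcases lt_trichotomy x 0 with hx | rfl | hx
  · rw [max_eq_right hx.le, Real.zero_rpow (by linarith), mul_zero]
    refine (hasDerivAt_const x (0 : ℝ)).congr_of_eventuallyEq ?_
    filter_upwards [Iio_mem_nhds hx] with y hy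
    rw [max_eq_right (le_of_lt hy), Real.zero_rpow (by linarith)]
  · have hR : HasDerivWithinAt (fun y : ℝ => (max y 0) ^ r) (r * (max 0 0) ^ (r - 1))
        (Set.Ici 0) 0 := by
      rw [max_self]
      refine (Real.hasDerivAt_rpow_const (Or.inr hr.le)).hasDerivWithinAt.congr ?_ (by simp)
      intro y hy
      simp only [max_eq_left (Set.mem_Ici.mp hy)]
    have hL : HasDerivWithinAt (fun y : ℝ => (max y 0) ^ r) (r * (max 0 0) ^ (r - 1))
        (Set.Iic 0) 0 := by
      rw [max_self, Real.zero_rpow (by linarith), mul_zero]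
      refine (hasDerivWithinAt_const (0 : ℝ) (Set.Iic 0) (0 : ℝ)).congr ?_ ?_
      · intro y hy
        simp only [max_eq_right (Set.mem_Iic.mp hy)]
        exact Real.zero_rpow (by linarith)
      · simp only [max_self]
        exact Real.zero_rpow (by linarith)
    have h := hL.union hR
    rwa [Set.Iic_union_Ici, hasDerivWithinAt_univ] at h
  · rw [max_eq_left hx.le]
    refine (Real.hasDerivAt_rpow_const (Or.inr hr.le)).congr_of_eventuallyEq ?_
    filter_upwards [Ioi_mem_nhds hx] with y hy
    rw [max_eq_left (le_of_lt hy)]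

lemma hasDerivAt_transformed {k p ψ : ℝ} (hk : 2 ≤ k) (hp : k + 1 < p) {g : ℝ → ℝ}
    (hg : ∀ s : ℝ, HasDerivAt g ((1 + |g s| ^ k) ^ (-(1:ℝ)/2)) s) (s : ℝ) :
    HasDerivAt (fun s => ψ * (max (g s) 0) ^ p * (1 + |g s| ^ k) ^ (-(1:ℝ)/2))
      (ψ * slopeFn k p (max (g s) 0)) s := by
  -- Where `g s < 0` the factor `(max (g s) 0) ^ p` is zero, so `|g s|` may be replaced by
  -- `max (g s) 0`, which makes the function a composition with truncated powers.
  have heq : (fun s => ψ * (max (g s) 0) ^ p * (1 + |g s| ^ k) ^ (-(1:ℝ)/2)) =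
      fun s => ψ * ((max (g s) 0) ^ p * (1 + (max (g s) 0) ^ k) ^ (-(1:ℝ)/2)) := by
    funext s
    rcases le_total 0 (g s) with h | h
    · rw [max_eq_left h, abs_of_nonneg h, mul_assoc]
    · rw [max_eq_right h, Real.zero_rpow (by linarith : p ≠ 0)]
      ring
  rw [heq]
  refine HasDerivAt.const_mul ψ ?_
  have h1 := (hasDerivAt_max_rpow (by linarith : 1 < p) (g s)).comp s (hg s)
  have h2 := ((hasDerivAt_max_rpow (by linarith : 1 < k) (g s)).comp s (hg s)).const_add 1
  have hpos : 0 < 1 + (max (g s) 0) ^ k := by positivity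
  have h3 := h1.mul (h2.rpow_const (p := -(1:ℝ)/2) (Or.inl hpos.ne'))
  refine h3.congr_deriv ?_
  simp only [Function.comp_apply, slopeFn]
  rcases le_or_gt (g s) 0 with h | h
  · rw [max_eq_right h, Real.zero_rpow (by linarith : p - 1 ≠ 0),
      Real.zero_rpow (by linarith : p ≠ 0), Real.zero_rpow (by linarith : k ≠ 0)]
    ring
  · rw [max_eq_left h.le] at hpos ⊢
    rw [abs_of_pos h]
    set t := g s
    have e1 : t ^ (p - 1) = t ^ (p - 1 - k) * t ^ k := by
      rw [← Real.rpow_add h]; congr 1; ring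
    have e2 : t ^ p = t ^ (p - 1) * t := by
      rw [← Real.rpow_add_one h.ne']; congr 1; ring
    have e3 : t ^ (k - 1) = t ^ k / t := Real.rpow_sub_one h.ne' k
    have e4 : (1 + t ^ k) ^ (-(1:ℝ)/2 - 1) = (1 + t ^ k) ^ (-(1:ℝ)/2) / (1 + t ^ k) :=
      Real.rpow_sub_one hpos.ne' _
    have e5 : (1 + t ^ k) ^ (-(1:ℝ)/2) * (1 + t ^ k) ^ (-(1:ℝ)/2) = (1 + t ^ k)⁻¹ := by
      rw [← Real.rpow_add hpos, ← Real.rpow_neg_one]; norm_num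
    rw [e2, e1, e3, e4]
    set u := t ^ k
    set w := (1 + u) ^ (-(1:ℝ)/2)
    set c := t ^ (p - 1 - k)
    calc _ = (w * w) * (c * (p * u - k / 2 * u ^ 2 / (1 + u))) := by
          field_simp
          ring
      _ = _ := by
          rw [e5]
          field_simp
          ring

/-- Convexity of the transformed nonlinearity
`h(s) = ψ · (max (g s) 0)^p · (1 + |g s|^k)^(-1/2)` when `k ≥ 2` and `p > k + 1`:
convex on `ℝ` if `ψ ≥ 0`, strictly convex on `(0, ∞)` if `ψ > 0`. -/
theorem transformed_nonlinearity_convex (k p ψ : ℝ) (hk : 2 ≤ k) (hp : k + 1 < p)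
    (g : ℝ → ℝ) (hg0 : g 0 = 0)
    (hg : ∀ s : ℝ, HasDerivAt g ((1 + |g s| ^ k) ^ (-(1:ℝ)/2)) s) :
    (0 ≤ ψ → ConvexOn ℝ Set.univ
      (fun s => ψ * (max (g s) 0) ^ p * (1 + |g s| ^ k) ^ (-(1:ℝ)/2))) ∧
    (0 < ψ → StrictConvexOn ℝ (Set.Ioi (0:ℝ))
      (fun s => ψ * (max (g s) 0) ^ p * (1 + |g s| ^ k) ^ (-(1:ℝ)/2))) := by
  have hd := fun s => hasDerivAt_transformed (ψ := ψ) hk hp hg s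
  have hderiv := funext fun s => (hd s).deriv
  have hmono : StrictMono g :=
    strictMono_of_hasDerivAt_pos hg fun s => by positivity
  constructor
  · intro hψ
    refine Monotone.convexOn_univ_of_deriv (fun s => (hd s).differentiableAt) ?_
    rw [hderiv]
    intro x y hxy
    exact mul_le_mul_of_nonneg_left ((slopeFn_strictMonoOn hk hp).monotoneOn
      (Set.mem_Ici.mpr (le_max_right _ _))
      (Set.mem_Ici.mpr (le_max_right _ _)) (max_le_max_right 0 (hmono.monotone hxy))) hψ
  · intro hψ
    refine StrictMonoOn.strictConvexOn_of_deriv (convex_Ioi 0)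
      (fun s _ => (hd s).continuousAt.continuousWithinAt) ?_
    rw [hderiv, interior_Ioi]
    intro x hx y hy hxy
    have hgx : 0 < g x := hg0 ▸ hmono hx
    have hgy : 0 < g y := hg0 ▸ hmono hy
    simp only [max_eq_left hgx.le, max_eq_left hgy.le]
    exact mul_lt_mul_of_pos_left (slopeFn_strictMonoOn hk hp hgx.le hgy.le (hmono hxy)) hψ
end

section
/- For every real number k > 1 there exists a real number p_k > 2 such that for every real p ≥ p_k the following holds: for every real ψ > 0 and every g : ℝ → ℝ satisfying g(0) = 0 and, for every s ∈ ℝ, HasDerivAt g ((1 + |g(s)|^k)^(-1/2)) s, the derivative function deriv h of h(s) = ψ · (max (g(s)) 0)^p · (1 + |g(s)|^k)^(-1/2) is strictly convex on the open interval (0, +∞). -/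
/-!
Write `t = g s`, `u = t ^ k`, `A = 1 + u`. For `s > 0` one has `t > 0` and `dt/ds = A ^ (-1/2)`, so
functions of the form `t ^ q * A ^ (-m) * P u` with `P` a polynomial are stable under `d/ds`:
the derivative is `t ^ (q - 1) * A ^ (-(m + 3/2)) * ((q * A - m * k * u) * P u + k * u * A * P' u)`
(`hasDerivAt_weighted`). Starting from `h = ψ * t ^ p * A ^ (-1/2)`, three applications give
`h''' = ψ * t ^ (p - 3) * A ^ (-5) * P₃ u` with `P₃` a cubic polynomial. Its coefficients are sums
of products of `p`, `p - 1`, `p - 2`, `k`, `p - k/2`, `p - 1 - k`, `p - 1 - 2k`, `p - 2 - 7k/2` and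
similar factors, all positive once `p ≥ 3 + 4k`. Hence `h'` has positive second derivative.
-/

/-- The differentiation rule for `t ^ q * (1 + t ^ k) ^ (-m) * P (t ^ k)` along `t = g s`. -/
lemma hasDerivAt_weighted {k : ℝ} {g : ℝ → ℝ} {s : ℝ} (hpos : 0 < g s)
    (hg : HasDerivAt g ((1 + |g s| ^ k) ^ (-(1:ℝ)/2)) s) (q m : ℝ) {P : ℝ → ℝ} {P' : ℝ}
    (hP : HasDerivAt P P' (g s ^ k)) :
    HasDerivAt (fun s => g s ^ q * (1 + g s ^ k) ^ (-m) * P (g s ^ k))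
      (g s ^ (q - 1) * (1 + g s ^ k) ^ (-(m + 3/2)) *
        ((q * (1 + g s ^ k) - m * k * g s ^ k) * P (g s ^ k)
          + k * g s ^ k * (1 + g s ^ k) * P')) s := by
  rw [abs_of_pos hpos] at hg
  have hu : 0 < g s ^ k := Real.rpow_pos_of_pos hpos k
  have hA : 0 < 1 + g s ^ k := by linarith
  have h1 := hg.rpow_const (p := q) (Or.inl hpos.ne')
  have h2 := hg.rpow_const (p := k) (Or.inl hpos.ne')
  have h3 := (h2.const_add 1).rpow_const (p := -m) (Or.inl hA.ne')
  have h4 := hP.comp s h2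
  refine ((h1.mul h3).mul h4).congr_deriv ?_
  -- all powers are expressed through `t ^ (q - 1)`, `t ^ k`, `t` and `A ^ (-(m + 3/2))`, `A`
  have e1 : g s ^ q = g s ^ (q - 1) * g s := by
    rw [Real.rpow_sub_one hpos.ne']; field_simp
  have e2 : g s ^ (k - 1) = g s ^ k / g s := Real.rpow_sub_one hpos.ne' k
  have e3 : (1 + g s ^ k) ^ (-m) * (1 + g s ^ k) ^ (-(1:ℝ)/2)
      = (1 + g s ^ k) ^ (-(m + 3/2)) * (1 + g s ^ k) := by
    rw [← Real.rpow_add hA, ← Real.rpow_add_one hA.ne']; congr 1; ring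
  have e4 : (1 + g s ^ k) ^ (-m - 1) * (1 + g s ^ k) ^ (-(1:ℝ)/2)
      = (1 + g s ^ k) ^ (-(m + 3/2)) := by
    rw [← Real.rpow_add hA]; congr 1; ring
  simp only [Function.comp, Pi.mul_apply]
  rw [e2, e1]
  generalize (1 + g s ^ k) ^ (-m) = B at *
  generalize (1 + g s ^ k) ^ (-m - 1) = C at *
  generalize (1 + g s ^ k) ^ (-(1:ℝ)/2) = E at *
  generalize (1 + g s ^ k) ^ (-(m + 3/2)) = F at *
  generalize g s ^ (q - 1) = T at *
  generalize g s ^ k = u at *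
  have ht : g s ≠ 0 := hpos.ne'
  generalize g s = t at *
  field_simp
  linear_combination T * (q * P u + k * u * P') * e3 - T * m * k * u * P u * e4

/-- For `k > 1` there is `p_k > 2` such that for all `p ≥ p_k` the derivative of the
transformed nonlinearity `h(s) = ψ · (max (g s) 0)^p · (1 + |g s|^k)^(-1/2)` is strictly
convex on `(0, ∞)`, for every `ψ > 0`. -/
theorem deriv_transformed_strictly_convex_pos (k : ℝ) (hk : 1 < k) :
    ∃ p_k : ℝ, 2 < p_k ∧ ∀ p : ℝ, p_k ≤ p → ∀ ψ : ℝ, 0 < ψ →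
      ∀ g : ℝ → ℝ, g 0 = 0 →
        (∀ s : ℝ, HasDerivAt g ((1 + |g s| ^ k) ^ (-(1:ℝ)/2)) s) →
        StrictConvexOn ℝ (Set.Ioi (0:ℝ))
          (deriv (fun s => ψ * (max (g s) 0) ^ p * (1 + |g s| ^ k) ^ (-(1:ℝ)/2))) := by
  refine ⟨3 + 4 * k, by linarith, fun p hp ψ hψ g hg0 hg => ?_⟩
  have hmono : StrictMono g := strictMono_of_deriv_pos fun s => by
    rw [(hg s).deriv]; positivity
  have hpos : ∀ s ∈ Set.Ioi (0:ℝ), 0 < g s := fun s hs => hg0 ▸ hmono hs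
  -- `P₁`, `P₂`, `P₃` are the polynomial factors of `h'`, `h''`, `h'''`
  let P₁ : ℝ → ℝ := fun u => p + (p - k/2) * u
  let a₀ : ℝ := (p - 1) * p
  let a₁ : ℝ := (p - 1) * (p - k/2) + (p - 1 - 2*k) * p + k * (p - k/2)
  let a₂ : ℝ := (p - 1 - k) * (p - k/2)
  let P₂ : ℝ → ℝ := fun u => a₀ + a₁ * u + a₂ * u ^ 2
  let P₃ : ℝ → ℝ := fun u => (p - 2) * a₀ + ((p - 2 + k) * a₁ + (p - 2 - 7/2*k) * a₀) * u
    + ((p - 2 + 2*k) * a₂ + (p - 2 - 5/2*k) * a₁) * u ^ 2 + (p - 2 - 3/2*k) * a₂ * u ^ 3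
  let H₁ : ℝ → ℝ := fun s => ψ * (g s ^ (p - 1) * (1 + g s ^ k) ^ (-(2:ℝ)) * P₁ (g s ^ k))
  let H₂ : ℝ → ℝ := fun s => ψ * (g s ^ (p - 2) * (1 + g s ^ k) ^ (-(7/2:ℝ)) * P₂ (g s ^ k))
  let H₃ : ℝ → ℝ := fun s => ψ * (g s ^ (p - 3) * (1 + g s ^ k) ^ (-(5:ℝ)) * P₃ (g s ^ k))
  have hd1 : ∀ s ∈ Set.Ioi (0:ℝ), HasDerivAt
      (fun s => ψ * (max (g s) 0) ^ p * (1 + |g s| ^ k) ^ (-(1:ℝ)/2)) (H₁ s) s := by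
    intro s hs
    have h := (hasDerivAt_weighted (hpos s hs) (hg s) p (1/2)
      (hasDerivAt_const (g s ^ k) (1:ℝ))).const_mul ψ
    refine (h.congr_deriv ?_).congr_of_eventuallyEq ?_
    · simp only [H₁, P₁]
      norm_num
      left; left; ring
    · filter_upwards [isOpen_Ioi.mem_nhds hs] with x hx
      rw [abs_of_pos (hpos x hx), max_eq_left (hpos x hx).le, neg_div]
      ring
  have hd2 : ∀ s ∈ Set.Ioi (0:ℝ), HasDerivAt H₁ (H₂ s) s := by
    intro s hs
    have hP : HasDerivAt P₁ (p - k/2) (g s ^ k) := by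
      exact (((hasDerivAt_id (g s ^ k)).const_mul (p - k/2)).const_add p).congr_deriv (by simp)
    refine ((hasDerivAt_weighted (hpos s hs) (hg s) (p - 1) 2 hP).const_mul ψ).congr_deriv ?_
    simp only [H₂, P₁, P₂, a₀, a₁, a₂]
    rw [show p - 1 - 1 = p - 2 by ring, show (2:ℝ) + 3/2 = 7/2 by norm_num]
    ring
  have hd3 : ∀ s ∈ Set.Ioi (0:ℝ), HasDerivAt H₂ (H₃ s) s := by
    intro s hs
    have hP : HasDerivAt P₂ (a₁ + a₂ * (2 * g s ^ k)) (g s ^ k) := by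
      exact ((((hasDerivAt_id (g s ^ k)).const_mul a₁).const_add a₀).add
        (((hasDerivAt_id (g s ^ k)).pow 2).const_mul a₂)).congr_deriv (by simp)
    refine ((hasDerivAt_weighted (hpos s hs) (hg s) (p - 2) (7/2) hP).const_mul ψ).congr_deriv ?_
    simp only [H₃, P₂, P₃]
    rw [show p - 2 - 1 = p - 3 by ring, show (7/2:ℝ) + 3/2 = 5 by norm_num]
    ring
  have hH₃ : ∀ s ∈ Set.Ioi (0:ℝ), 0 < H₃ s := by
    intro s hs
    have ht := hpos s hs
    have hu : 0 < g s ^ k := Real.rpow_pos_of_pos ht k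
    have c0 : 0 < k := by linarith
    have c1 : 0 < p := by linarith
    have c2 : 0 < p - 1 := by linarith
    have c3 : 0 < p - 2 := by linarith
    have c4 : 0 < p - k/2 := by linarith
    have c5 : 0 < p - 1 - 2*k := by linarith
    have c6 : 0 < p - 1 - k := by linarith
    have c7 : 0 < p - 2 - 7/2*k := by linarith
    have c8 : 0 < p - 2 - 5/2*k := by linarith
    have c9 : 0 < p - 2 - 3/2*k := by linarith
    have ha₀ : 0 < a₀ := by positivity
    have ha₁ : 0 < a₁ := by positivity
    have ha₂ : 0 < a₂ := by positivity
    have hP₃ : 0 < P₃ (g s ^ k) := by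
      simp only [P₃]
      positivity
    simp only [H₃]
    positivity
  have hconv : StrictConvexOn ℝ (Set.Ioi (0:ℝ)) H₁ := by
    refine strictConvexOn_of_deriv2_pos' (convex_Ioi 0)
      (fun s hs => (hd2 s hs).continuousAt.continuousWithinAt) fun s hs => ?_
    have he : deriv H₁ =ᶠ[nhds s] H₂ := by
      filter_upwards [isOpen_Ioi.mem_nhds hs] with x hx using (hd2 x hx).deriv
    have : deriv^[2] H₁ s = H₃ s := by
      simp only [Function.iterate_succ, Function.iterate_zero, Function.comp, id]
      rw [he.deriv_eq, (hd3 s hs).deriv]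
    rw [this]
    exact hH₃ s hs
  exact hconv.congr fun s hs => (hd1 s hs).deriv.symm
end

section
/- Let N ≥ 1, let a : ℝ → ℝ be continuously differentiable with a(t) > 0 for all t, let g : ℝ → ℝ satisfy: for every s ∈ ℝ, g has derivative (a(g(s)))^(-1/2) at s, let x ∈ EuclideanSpace ℝ (Fin N), and let v : EuclideanSpace ℝ (Fin N) → ℝ be twice continuously differentiable at x (ContDiffAt ℝ 2 v x). Set u = g ∘ v. Then a(u(x)) · (∑ i, (iteratedFDeriv ℝ 2 u x) (eᵢ, eᵢ)) + (1/2) · (deriv a (u(x))) · (∑ i, (fderiv ℝ u x eᵢ)²) = (a(u(x)))^(1/2) · (∑ i, (iteratedFDeriv ℝ 2 v x) (eᵢ, eᵢ)), where (eᵢ) is the standard orthonormal basis of EuclideanSpace ℝ (Fin N). -/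
/-!
Put `h = (a ∘ g)^(-1/2) = g'`. The chain rule gives `Du = h(v) Dv` near `x`, and differentiating
once more, `D²u(e, e) = h(v) D²v(e, e) + h'(v) (Dv e)²`, where
`h' = -(1/2) a'(g) h (a ∘ g)^(-3/2)`. Since `a(g) h = a(g)^(1/2)` and
`a(g) h' = -(1/2) a'(g) h²`, the gradient terms cancel direction by direction.
-/

/-- Second-order chain rule for `g ∘ v` with a scalar outer function `g`, on the diagonal. -/
lemma iteratedFDeriv_two_scalar_comp {E : Type*} [NormedAddCommGroup E] [NormedSpace ℝ E]
    {g h : ℝ → ℝ} {h' : ℝ} {v : E → ℝ} {x : E} (hg : ∀ s, HasDerivAt g (h s) s)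
    (hh : HasDerivAt h h' (v x)) (hv : ContDiffAt ℝ 2 v x) (e : E) :
    iteratedFDeriv ℝ 2 (g ∘ v) x ![e, e] =
      h (v x) * iteratedFDeriv ℝ 2 v x ![e, e] + h' * (fderiv ℝ v x e) ^ 2 := by
  have hvx : DifferentiableAt ℝ v x := hv.differentiableAt (by norm_num)
  have hdv : DifferentiableAt ℝ (fderiv ℝ v) x :=
    (hv.fderiv_right (m := 1) (by norm_num)).differentiableAt (by norm_num)
  have hev : fderiv ℝ (g ∘ v) =ᶠ[nhds x] fun y => h (v y) • fderiv ℝ v y := by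
    filter_upwards [hv.eventually (by simp)] with y hy
    exact ((hg (v y)).comp_hasFDerivAt y
      (hy.differentiableAt (by norm_num)).hasFDerivAt).fderiv
  have hd := (hh.comp_hasFDerivAt x hvx.hasFDerivAt).smul hdv.hasFDerivAt
  have hfd : fderiv ℝ (fderiv ℝ (g ∘ v)) x = _ := hev.fderiv_eq.trans hd.fderiv
  rw [iteratedFDeriv_two_apply, iteratedFDeriv_two_apply, hfd]
  simp
  ring

/-- For `u = g ∘ v` with `g' = (a ∘ g)^(-1/2)`:
`a(u)Δu + (a'(u)/2)|Du|² = √(a(u))·Δv`. -/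
theorem quasilinear_laplacian_change_of_variable
    {N : ℕ} (hN : 1 ≤ N)
    (a : ℝ → ℝ) (ha : ContDiff ℝ 1 a) (hapos : ∀ t : ℝ, 0 < a t)
    (g : ℝ → ℝ) (hg : ∀ s : ℝ, HasDerivAt g ((a (g s)) ^ (-(1:ℝ)/2)) s)
    (x : EuclideanSpace ℝ (Fin N))
    (v : EuclideanSpace ℝ (Fin N) → ℝ) (hv : ContDiffAt ℝ 2 v x)
    (u : EuclideanSpace ℝ (Fin N) → ℝ) (hu : u = g ∘ v) :
    a (u x) * (∑ i : Fin N, (iteratedFDeriv ℝ 2 u x)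
        ![EuclideanSpace.single i (1:ℝ), EuclideanSpace.single i (1:ℝ)])
      + (1/2) * deriv a (u x) *
        (∑ i : Fin N, (fderiv ℝ u x (EuclideanSpace.single i (1:ℝ))) ^ 2)
      = (a (u x)) ^ ((1:ℝ)/2) *
        (∑ i : Fin N, (iteratedFDeriv ℝ 2 v x)
          ![EuclideanSpace.single i (1:ℝ), EuclideanSpace.single i (1:ℝ)]) := by
  subst hu
  have hA : 0 < a (g (v x)) := hapos _
  have hvx : DifferentiableAt ℝ v x := hv.differentiableAt (by norm_num)
  have hh := (((ha.differentiable (by norm_num) (g (v x))).hasDerivAt.comp (v x)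
    (hg (v x))).rpow_const (p := -(1:ℝ)/2) (Or.inl hA.ne'))
  have hfd : fderiv ℝ (g ∘ v) x = _ :=
    ((hg (v x)).comp_hasFDerivAt x hvx.hasFDerivAt).fderiv
  have h1 : a (g (v x)) * a (g (v x)) ^ (-(1:ℝ)/2) = a (g (v x)) ^ ((1:ℝ)/2) := by
    rw [← Real.rpow_one_add' hA.le (by norm_num)]
    norm_num
  have h2 : a (g (v x)) * a (g (v x)) ^ (-(1:ℝ)/2 - 1) = a (g (v x)) ^ (-(1:ℝ)/2) := by
    rw [← Real.rpow_one_add' hA.le (by norm_num)]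
    norm_num
  rw [Finset.mul_sum, Finset.mul_sum, Finset.mul_sum, ← Finset.sum_add_distrib]
  refine Finset.sum_congr rfl fun i _ => ?_
  rw [iteratedFDeriv_two_scalar_comp hg hh hv, hfd]
  simp only [Function.comp_apply, ContinuousLinearMap.smul_apply, smul_eq_mul]
  generalize fderiv ℝ v x (EuclideanSpace.single i 1) = d
  rw [← h1]
  linear_combination
    (-(1/2) * deriv a (g (v x)) * a (g (v x)) ^ (-(1:ℝ)/2) * d ^ 2) * h2
end

section
/- Let N ≥ 1, let Ω ⊆ EuclideanSpace ℝ (Fin N) be open, let a : ℝ → ℝ be continuously differentiable with a(t) > 0 for all t, let g : ℝ → ℝ satisfy: for every s ∈ ℝ, g has derivative (a(g(s)))^(-1/2) at s, let f : EuclideanSpace ℝ (Fin N) → ℝ → ℝ, and define h(x, s) = f(x, g(s)) · (a(g(s)))^(-1/2). Let v : EuclideanSpace ℝ (Fin N) → ℝ be twice continuously differentiable on Ω and set u = g ∘ v. Then for every x ∈ Ω: −a(u(x)) · Δu(x) − (1/2) · (deriv a (u(x))) · (∑ i, (fderiv ℝ u x eᵢ)²) = f(x, u(x)) if and only if −Δv(x)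 = h(x, v(x)), where Δw(x) := ∑ i, (iteratedFDeriv ℝ 2 w x)(eᵢ, eᵢ) and (eᵢ) is the standard orthonormal basis. -/
/-!
Write `B = a(g(s))^(-1/2)`, so that `a(g(s)) B² = 1` and `g' = B`. Differentiating the Cauchy
problem once more gives `g'' = -(1/2) a'(g) B⁴` (`hasDerivAt_rpow_comp`), and the second-order
chain rule (`fderiv_fderiv_comp_apply`) reads `∂ᵢᵢu = B ∂ᵢᵢv + g''(v) (∂ᵢv)²`. Since
`a(u) g''(v) = -(1/2) a'(u) B²`, the gradient terms on the left-hand side cancel, leaving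
`-a(u) B Δv`. Multiplying by `B ≠ 0` and using `a(u) B² = 1` gives the equivalence.
-/

lemma mul_rpow_neg_half_sq {t : ℝ} (ht : 0 < t) : t * (t ^ (-(1:ℝ)/2)) ^ 2 = 1 := by
  rw [← Real.rpow_natCast, ← Real.rpow_mul ht.le]
  norm_num
  rw [Real.rpow_neg_one, mul_inv_cancel₀ ht.ne']

/-- The second derivative of a solution of `g' = (a ∘ g)^(-1/2)`, with every power of `a ∘ g`
expressed through `g'` itself. -/
lemma hasDerivAt_rpow_comp {a g : ℝ → ℝ} (ha : Differentiable ℝ a) (hapos : ∀ t, 0 < a t)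
    (hg : ∀ s : ℝ, HasDerivAt g ((a (g s)) ^ (-(1:ℝ)/2)) s) (s : ℝ) :
    HasDerivAt (fun s => (a (g s)) ^ (-(1:ℝ)/2))
      (-(1/2) * deriv a (g s) * ((a (g s)) ^ (-(1:ℝ)/2)) ^ 4) s := by
  have h1 : HasDerivAt (fun s => a (g s)) _ s :=
    (ha (g s)).hasDerivAt.comp s (hg s)
  have h2 := h1.rpow_const (p := -(1:ℝ)/2) (Or.inl (hapos _).ne')
  convert h2 using 1
  have h3 : (a (g s)) ^ (-(1:ℝ)/2 - 1) = ((a (g s)) ^ (-(1:ℝ)/2)) ^ 3 := by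
    rw [← Real.rpow_natCast, ← Real.rpow_mul (hapos _).le]
    norm_num
  rw [h3]
  ring

/-- Second-order chain rule for `g ∘ v` with `g` scalar; only differentiability of `v` near `x`
and of its derivative at `x` is needed. -/
lemma fderiv_fderiv_comp_apply {E : Type*} [NormedAddCommGroup E] [NormedSpace ℝ E]
    {g b : ℝ → ℝ} {c : ℝ} {v : E → ℝ} {x : E} (hg : ∀ s, HasDerivAt g (b s) s)
    (hb : HasDerivAt b c (v x)) (hv : ∀ᶠ y in nhds x, DifferentiableAt ℝ v y)
    (hv' : DifferentiableAt ℝ (fderiv ℝ v) x) (e : E) :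
    fderiv ℝ (fderiv ℝ (g ∘ v)) x e e
      = b (v x) * fderiv ℝ (fderiv ℝ v) x e e + c * (fderiv ℝ v x e) ^ 2 := by
  have h1 : fderiv ℝ (g ∘ v) =ᶠ[nhds x] fun y => b (v y) • fderiv ℝ v y := by
    filter_upwards [hv] with y hy
    exact ((hg (v y)).comp_hasFDerivAt y hy.hasFDerivAt).fderiv
  have h2 : HasFDerivAt (fun y => b (v y)) (c • fderiv ℝ v x) x :=
    hb.comp_hasFDerivAt x hv.self_of_nhds.hasFDerivAt
  have h3 : HasFDerivAt (fun y => b (v y) • fderiv ℝ v y) _ x := h2.smul hv'.hasFDerivAt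
  rw [h1.fderiv_eq, h3.fderiv]
  simp
  ring

/-- A C² function `u = g ∘ v` solves the quasi-linear equation
`−a(u)Δu − (a'(u)/2)|Du|² = f(x,u)` at `x ∈ Ω` if and only if `v` solves the
semi-linear equation `−Δv = h(x,v)` at `x`, where `h(x,s) = f(x, g(s))·a(g(s))^(-1/2)`. -/
theorem quasilinear_iff_semilinear
    {N : ℕ} (hN : 1 ≤ N) (Ω : Set (EuclideanSpace ℝ (Fin N))) (hΩ : IsOpen Ω)
    (a : ℝ → ℝ) (ha : ContDiff ℝ 1 a) (hapos : ∀ t : ℝ, 0 < a t)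
    (g : ℝ → ℝ) (hg : ∀ s : ℝ, HasDerivAt g ((a (g s)) ^ (-(1:ℝ)/2)) s)
    (f : EuclideanSpace ℝ (Fin N) → ℝ → ℝ)
    (h : EuclideanSpace ℝ (Fin N) → ℝ → ℝ)
    (hh : h = fun x s => f x (g s) * (a (g s)) ^ (-(1:ℝ)/2))
    (v : EuclideanSpace ℝ (Fin N) → ℝ) (hv : ContDiffOn ℝ 2 v Ω)
    (u : EuclideanSpace ℝ (Fin N) → ℝ) (hu : u = g ∘ v) :
    ∀ x ∈ Ω,
      (-(a (u x) * (∑ i : Fin N, (iteratedFDeriv ℝ 2 u x)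
            ![EuclideanSpace.single i (1:ℝ), EuclideanSpace.single i (1:ℝ)]))
        - (1/2) * deriv a (u x) *
            (∑ i : Fin N, (fderiv ℝ u x (EuclideanSpace.single i (1:ℝ))) ^ 2)
        = f x (u x))
      ↔
      (-(∑ i : Fin N, (iteratedFDeriv ℝ 2 v x)
            ![EuclideanSpace.single i (1:ℝ), EuclideanSpace.single i (1:ℝ)])
        = h x (v x)) := by
  intro x hx
  subst hu hh
  have hvx : ContDiffAt ℝ 2 v x := hv.contDiffAt (hΩ.mem_nhds hx)
  have hd : ∀ᶠ y in nhds x, DifferentiableAt ℝ v y := by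
    filter_upwards [hΩ.mem_nhds hx] with y hy
    exact (hv.contDiffAt (hΩ.mem_nhds hy)).differentiableAt (by norm_num)
  have hd' : DifferentiableAt ℝ (fderiv ℝ v) x :=
    (hvx.fderiv_right (m := 1) (by norm_num)).differentiableAt (by norm_num)
  have hfu : fderiv ℝ (g ∘ v) x = (a (g (v x))) ^ (-(1:ℝ)/2) • fderiv ℝ v x :=
    ((hg (v x)).comp_hasFDerivAt x hd.self_of_nhds.hasFDerivAt).fderiv
  have hb := hasDerivAt_rpow_comp (ha.differentiable (by norm_num)) hapos hg (v x)
  have hB := mul_rpow_neg_half_sq (hapos (g (v x)))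
  simp only [iteratedFDeriv_two_apply, Matrix.cons_val_zero, Matrix.cons_val_one,
    fderiv_fderiv_comp_apply hg hb hd hd', hfu, smul_apply, smul_eq_mul,
    mul_pow, Finset.sum_add_distrib, ← Finset.mul_sum, Function.comp_apply]
  generalize (a (g (v x))) ^ (-(1:ℝ)/2) = B at *
  generalize ∑ i : Fin N, fderiv ℝ (fderiv ℝ v) x (EuclideanSpace.single i (1:ℝ))
    (EuclideanSpace.single i (1:ℝ)) = L
  generalize ∑ i : Fin N, (fderiv ℝ v x (EuclideanSpace.single i (1:ℝ))) ^ 2 = G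
  generalize deriv a (g (v x)) = A at *
  generalize a (g (v x)) = t at *
  generalize f x (g (v x)) = F
  constructor
  · intro H
    linear_combination B * H + (L - 1/2 * A * B ^ 3 * G) * hB
  · intro H
    linear_combination t * B * H + (F + 1/2 * A * B ^ 2 * G) * hB
end
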